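/- There exist finitely many physical measures such that the union of their basins of attraction covers X Leb-almost everywhere if and only if the set O of observable measures is finite; and in this case O = Phy, i.e. the observable measures are exactly the physical measures. -/

import Mathlib

open MeasureTheory Filter Topology
open scoped ENNReal

/-- The empirical probability measure `γ_{n+1,x} = (1/(n+1)) ∑_{j≤n} δ_{T^j x}` of the orbit
of `x` (indexed so that it is a probability measure for every index). -/
noncomputable def empiricalPM {X : Type*} [MeasurableSpace X] (T : X → X) (x : X) (n : ℕ) :
    MeasureTheory.ProbabilityMeasure X :=
  ⟨(n + 1 : ℝ≥0∞)⁻¹ • ∑ j ∈ Finset.range (n + 1), MeasureTheory.Measure.dirac (T^[j] x), by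
    constructor
    rw [Measure.smul_apply, Measure.finset_sum_apply]
    simp
    rw [ENNReal.inv_mul_cancel] <;> simp⟩

/-- The set `V(x)` of weak* limit points of the sequence of empirical measures of `x`. -/
def limitSet {X : Type*} [MeasurableSpace X] [TopologicalSpace X] [OpensMeasurableSpace X]
    (T : X → X) (x : X) : Set (MeasureTheory.ProbabilityMeasure X) :=
  {μ | ∃ φ : ℕ → ℕ, StrictMono φ ∧ Tendsto (fun j => empiricalPM T x (φ j)) atTop (𝓝 μ)}

/-- `μ` is an observable (physical-like) measure for `(X, T, Leb)`: every weak* neighbourhood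
`U` of `μ` (equivalently, every ε-ball around `μ` in a compatible metric) is intersected by
`V(x)` for a positive `Leb`-measure set of points `x`. -/
def IsObservable {X : Type*} [MeasurableSpace X] [TopologicalSpace X] [OpensMeasurableSpace X]
    (Leb : MeasureTheory.Measure X) (T : X → X) (μ : MeasureTheory.ProbabilityMeasure X) : Prop :=
  ∀ U : Set (MeasureTheory.ProbabilityMeasure X), IsOpen U → μ ∈ U →
    0 < Leb {x | (limitSet T x ∩ U).Nonempty}

/-- The Lyapunov exponent `χ(μ, Φ) = lim_n (1/n) ∫ log φ_n dμ` of a potential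
`Φ = {log φ_n}` (for invariant `μ` the limit exists by subadditivity, so it equals the
`liminf` used here); it takes values in `[-∞, ∞)`, i.e. in `EReal`. -/
noncomputable def lyapExp {X : Type*} [MeasurableSpace X] (φ : ℕ → X → ℝ)
    (μ : MeasureTheory.Measure X) : EReal :=
  liminf (fun n : ℕ => (((n : ℝ)⁻¹ * ∫ x, Real.log (φ n x) ∂μ : ℝ) : EReal)) atTop

/-- `μ` is a physical measure: its basin of attraction `B(μ) = {x : V(x) = {μ}}` has positive
`Leb`-measure. -/
def IsPhysical {X : Type*} [MeasurableSpace X] [TopologicalSpace X] [OpensMeasurableSpace X]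
    (Leb : MeasureTheory.Measure X) (T : X → X) (μ : MeasureTheory.ProbabilityMeasure X) : Prop :=
  0 < Leb {x | limitSet T x = {μ}}

/-!
Consecutive empirical measures differ by `O(1/n)` against every bounded test function, so `V(x)` is
the cluster set, in a compact metrizable space, of a sequence whose steps tend to zero; such a set
is connected. As the weak* topology is second countable, `O` is a closed set containing `V(x)` for
almost every `x`, and it is the smallest one. If `O` is finite, then for almost every `x` the set
`V(x)` is finite and connected, hence a singleton `{μ}` with `μ ∈ O`, and `μ` is physical for almost
all such `x` because there are only finitely many candidates. Conversely, if finitely many basins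
cover `X` almost everywhere, their attractors form a closed set containing almost every `V(x)`, so
this set contains `O`.
-/

section BirkhoffAverage

variable {α E : Type*}

theorem birkhoffAverage_succ_sub_birkhoffAverage (R : Type*) [DivisionRing R] [CharZero R]
    [AddCommGroup E] [Module R E] (f : α → α) (g : α → E) (n : ℕ) (x : α) :
    birkhoffAverage R f g (n + 1) x - birkhoffAverage R f g n x =
      ((n : R) + 1)⁻¹ • (g (f^[n] x) - birkhoffAverage R f g n x) := by
  have hsum : birkhoffSum f g n x = (n : R) • birkhoffAverage R f g n x := by
    rcases eq_or_ne n 0 with rfl | hn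
    · simp
    · rw [birkhoffAverage, smul_inv_smul₀ (Nat.cast_ne_zero.2 hn)]
  have hn : (n : R) + 1 ≠ 0 := n.cast_add_one_ne_zero
  rw [birkhoffAverage, birkhoffSum_succ, hsum, Nat.cast_add_one, eq_inv_smul_iff₀ hn, smul_sub,
    smul_inv_smul₀ hn, add_smul, one_smul]
  abel

variable (𝕜 : Type*) [RCLike 𝕜] [NormedAddCommGroup E] [NormedSpace 𝕜 E] {f : α → α}
  {g : α → E} {x : α}

theorem norm_birkhoffAverage_le {C : ℝ} (hC : ∀ k, ‖g (f^[k] x)‖ ≤ C) (n : ℕ) :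
    ‖birkhoffAverage 𝕜 f g n x‖ ≤ C := by
  have hC₀ : 0 ≤ C := (norm_nonneg _).trans (hC 0)
  calc ‖birkhoffAverage 𝕜 f g n x‖ = (n : ℝ)⁻¹ * ‖birkhoffSum f g n x‖ := by
        simp [birkhoffAverage, norm_smul]
    _ ≤ (n : ℝ)⁻¹ * (n * C) := by
        gcongr
        simpa [birkhoffSum] using norm_sum_le_of_le (Finset.range n) fun k _ => hC k
    _ ≤ C := by
        rw [← mul_assoc]
        exact mul_le_of_le_one_left hC₀ (inv_mul_le_one)

theorem tendsto_birkhoffAverage_succ_sub_birkhoffAverage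
    (h : Bornology.IsBounded (Set.range (g <| f^[·] x))) :
    Tendsto (fun n => birkhoffAverage 𝕜 f g (n + 1) x - birkhoffAverage 𝕜 f g n x) atTop
      (𝓝 0) := by
  obtain ⟨C, hC⟩ := h.exists_norm_le
  rw [Set.forall_mem_range] at hC
  have hlim : Tendsto (fun n : ℕ => 1 / ((n : ℝ) + 1) * (C + C)) atTop (𝓝 0) := by
    simpa using tendsto_one_div_add_atTop_nhds_zero_nat.mul_const (C + C)
  refine squeeze_zero_norm (fun n => ?_) hlim
  rw [birkhoffAverage_succ_sub_birkhoffAverage, norm_smul, norm_inv, one_div, ← Nat.cast_add_one,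
    RCLike.norm_natCast, Nat.cast_add_one]
  gcongr
  exact norm_sub_le_of_le (hC n) (norm_birkhoffAverage_le 𝕜 hC n)

end BirkhoffAverage

section ClusterSet

variable {Y : Type*} [TopologicalSpace Y]

/- If the cluster set splits into `A ⊆ U` and `B ⊆ V` with `U`, `V` open and disjoint, then a
sequence leaving `U` infinitely often would have a pair of consecutive terms clustering in
`Vᶜ ×ˢ Uᶜ`, hence a cluster point outside `A ∪ B`. So the sequence finally stays in `U` or
finally avoids it. -/
theorem isPreconnected_setOfPred_mapClusterPt [CompactSpace Y] [NormalSpace Y] {u : ℕ → Y}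
    (hu : ∀ a b, MapClusterPt (a, b) atTop (fun n => (u n, u (n + 1))) → a = b) :
    IsPreconnected {y | MapClusterPt y atTop u} := by
  refine (isPreconnected_iff_subset_of_fully_disjoint_closed isClosed_setOfPred_clusterPt).2 ?_
  intro A B hA hB hAB hdisj
  obtain ⟨U, V, hU, hV, hAU, hBV, hUV⟩ := normal_separation hA hB hdisj
  have hstay : ∀ᶠ n in atTop, u n ∈ U → u (n + 1) ∈ U := by
    by_contra hleave
    have hpair : ∃ᶠ n in atTop, (u n, u (n + 1)) ∈ Vᶜ ×ˢ Uᶜ :=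
      (not_eventually.1 hleave).mono fun n hn =>
        have ⟨hnU, hnU'⟩ := Classical.not_imp.1 hn
        ⟨hUV.notMem_of_mem_left hnU, hnU'⟩
    obtain ⟨⟨a, b⟩, ⟨haV, hbU⟩, hab⟩ :=
      (hV.isClosed_compl.prod hU.isClosed_compl).isCompact.exists_mapClusterPt_of_frequently hpair
    obtain rfl := hu a b hab
    have ha : MapClusterPt a atTop u := hab.continuousAt_comp (f := Prod.fst) continuousAt_fst
    exact (hAB ha).elim (fun haA => hbU (hAU haA)) fun haB => haV (hBV haB)
  by_cases hvisit : ∃ᶠ n in atTop, u n ∈ U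
  · left
    obtain ⟨N, hN⟩ := eventually_atTop.1 hstay
    obtain ⟨m, hNm, hm⟩ := frequently_atTop.1 hvisit N
    have hUm : ∀ n ≥ m, u n ∈ U :=
      Nat.le_induction hm fun n hmn hn => hN n (hNm.trans hmn) hn
    intro y hy
    refine (hAB hy).resolve_right fun hyB => ?_
    obtain ⟨n, hmn, hn⟩ :=
      frequently_atTop.1 (MapClusterPt.frequently hy (hV.mem_nhds (hBV hyB))) m
    exact hUV.notMem_of_mem_left (hUm n hmn) hn
  · right
    intro y hy
    exact (hAB hy).resolve_left fun hyA =>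
      hvisit (MapClusterPt.frequently hy (hU.mem_nhds (hAU hyA)))

theorem eventually_subset_setOfPred_frequently_inter_nonempty [HereditarilyLindelofSpace Y]
    {α : Type*} (l : Filter α) [CountableInterFilter l] (V : α → Set Y) :
    ∀ᶠ x in l, V x ⊆ {y | ∀ U, IsOpen U → y ∈ U → ∃ᶠ x in l, (V x ∩ U).Nonempty} := by
  set S := {y | ∀ U, IsOpen U → y ∈ U → ∃ᶠ x in l, (V x ∩ U).Nonempty}
  have hmiss : ∀ y ∈ Sᶜ, ∃ U, IsOpen U ∧ y ∈ U ∧ ∀ᶠ x in l, ¬ (V x ∩ U).Nonempty := by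
    intro y hy
    simpa [S] using hy
  choose! U hUopen hyU hU using hmiss
  obtain ⟨t, htc, htS, hcover⟩ := (HereditarilyLindelofSpace.isLindelof Sᶜ).elim_nhds_subcover U
    fun y hy => (hUopen y hy).mem_nhds (hyU y hy)
  filter_upwards [(eventually_countable_ball htc).2 fun y hy => hU y (htS y hy)] with x hx y hy
  by_contra hyS
  obtain ⟨z, hz, hyz⟩ := Set.mem_iUnion₂.1 (hcover hyS)
  exact hx z hz ⟨y, hy, hyz⟩

end ClusterSet

section EmpiricalMeasure

variable {X : Type*} [MeasurableSpace X]

theorem integral_empiricalPM {E : Type*} [NormedAddCommGroup E] [NormedSpace ℝ E]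
    [CompleteSpace E] {f : X → E} (hf : StronglyMeasurable f) (T : X → X) (x : X) (n : ℕ) :
    ∫ y, f y ∂(empiricalPM T x n : Measure X) = birkhoffAverage ℝ T f (n + 1) x := by
  change ∫ y, f y ∂((n + 1 : ℝ≥0∞)⁻¹ • ∑ j ∈ Finset.range (n + 1), Measure.dirac (T^[j] x)) = _
  rw [integral_smul_measure,
    integral_finsetSum_measure fun j _ => integrable_dirac' hf enorm_lt_top]
  simp only [integral_dirac' _ _ hf, birkhoffAverage, birkhoffSum, ENNReal.toReal_inv]
  norm_cast

variable [TopologicalSpace X] [OpensMeasurableSpace X]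

theorem continuous_empiricalPM {T : X → X} (hT : Continuous T) (n : ℕ) :
    Continuous fun x => empiricalPM T x n := by
  refine ProbabilityMeasure.continuous_iff_forall_continuous_integral.2 fun f => ?_
  simp only [integral_empiricalPM f.continuous.stronglyMeasurable, birkhoffAverage, birkhoffSum]
  exact Continuous.const_smul (continuous_finsetSum _ fun j _ => f.continuous.comp (hT.iterate j))
    ((n + 1 : ℕ) : ℝ)⁻¹

theorem tendsto_integral_empiricalPM_succ_sub (T : X → X) (x : X)
    (f : BoundedContinuousFunction X ℝ) :
    Tendsto (fun n => ∫ y, f y ∂(empiricalPM T x (n + 1) : Measure X) -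
      ∫ y, f y ∂(empiricalPM T x n : Measure X)) atTop (𝓝 0) := by
  simp only [integral_empiricalPM f.continuous.stronglyMeasurable]
  exact (tendsto_birkhoffAverage_succ_sub_birkhoffAverage ℝ
    (f.isBounded_range.subset (Set.range_comp_subset_range _ f))).comp (tendsto_add_atTop_nat 1)

end EmpiricalMeasure

section BorelSpace

variable {X : Type*} [MeasurableSpace X] [TopologicalSpace X] [HasOuterApproxClosed X]
  [BorelSpace X]

theorem eq_of_mapClusterPt_empiricalPM_succ {T : X → X} {x : X} {μ ν : ProbabilityMeasure X}
    (h : MapClusterPt (μ, ν) atTop (fun n => (empiricalPM T x n, empiricalPM T x (n + 1)))) :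
    μ = ν := by
  refine Subtype.ext (ext_of_forall_integral_eq_of_IsFiniteMeasure (μ := (μ : Measure X))
    (ν := (ν : Measure X)) fun f => ?_)
  have hcont : Continuous fun ρ : ProbabilityMeasure X => ∫ y, f y ∂(ρ : Measure X) :=
    ProbabilityMeasure.continuous_integral_boundedContinuousFunction f
  have hclus := h.continuousAt_comp
    ((hcont.comp continuous_snd).sub (hcont.comp continuous_fst)).continuousAt
  have hdiff : ∫ y, f y ∂(ν : Measure X) - ∫ y, f y ∂(μ : Measure X) = 0 :=
    eq_of_nhds_neBot (hclus.clusterPt.mono (tendsto_integral_empiricalPM_succ_sub T x f))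
  exact (sub_eq_zero.1 hdiff).symm

end BorelSpace

section LimitSet

variable {X : Type*} [MeasurableSpace X] [TopologicalSpace X]

theorem mem_limitSet_iff_mapClusterPt [OpensMeasurableSpace X]
    [FirstCountableTopology (ProbabilityMeasure X)] {T : X → X} {x : X}
    {μ : ProbabilityMeasure X} :
    μ ∈ limitSet T x ↔ MapClusterPt μ atTop (empiricalPM T x) :=
  ⟨fun ⟨_, hφ, h⟩ => h.mapClusterPt.of_comp hφ.tendsto_atTop, MapClusterPt.tendsto_subseq⟩

variable [CompactSpace X] [TopologicalSpace.MetrizableSpace X] [BorelSpace X]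

theorem limitSet_nonempty (T : X → X) (x : X) : (limitSet T x).Nonempty :=
  CompactSpace.tendsto_subseq (empiricalPM T x)

theorem isPreconnected_limitSet (T : X → X) (x : X) : IsPreconnected (limitSet T x) := by
  have hcluster : limitSet T x = {μ | MapClusterPt μ atTop (empiricalPM T x)} :=
    Set.ext fun _ => mem_limitSet_iff_mapClusterPt
  rw [hcluster]
  exact isPreconnected_setOfPred_mapClusterPt fun _ _ => eq_of_mapClusterPt_empiricalPM_succ

theorem exists_limitSet_eq_singleton_of_finite {T : X → X} {x : X}
    (hfin : (limitSet T x).Finite) : ∃ μ, limitSet T x = {μ} :=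
  Set.exists_eq_singleton_iff_nonempty_subsingleton.2 ⟨limitSet_nonempty T x,
    Set.not_nontrivial_iff.1 fun h =>
      (isPreconnected_limitSet T x).infinite_of_nontrivial h hfin⟩

theorem limitSet_eq_singleton_iff {T : X → X} {x : X} {μ : ProbabilityMeasure X} :
    limitSet T x = {μ} ↔ Tendsto (empiricalPM T x) atTop (𝓝 μ) := by
  constructor
  · intro h
    refine tendsto_nhds_of_unique_mapClusterPt fun ν hν => ?_
    simpa only [h, Set.mem_singleton_iff] using mem_limitSet_iff_mapClusterPt.2 hν
  · intro h
    refine Set.eq_singleton_iff_unique_mem.2 ⟨⟨id, strictMono_id, h⟩, ?_⟩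
    rintro ν ⟨φ, hφ, hν⟩
    exact tendsto_nhds_unique hν (h.comp hφ.tendsto_atTop)

theorem measurableSet_limitSet_eq_singleton {T : X → X} (hT : Continuous T)
    (μ : ProbabilityMeasure X) : MeasurableSet {x | limitSet T x = {μ}} := by
  simp only [limitSet_eq_singleton_iff]
  borelize (ProbabilityMeasure X)
  exact measurableSet_tendsto (𝓝 μ) fun n => (continuous_empiricalPM hT n).measurable

theorem ae_exists_mem_limitSet_eq_singleton_iff {Leb : Measure X} [IsProbabilityMeasure Leb]
    {T : X → X} (hT : Continuous T) {P : Set (ProbabilityMeasure X)} (hP : P.Countable) :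
    (∀ᵐ x ∂Leb, ∃ μ ∈ P, limitSet T x = {μ}) ↔
      Leb (⋃ μ ∈ P, {x | limitSet T x = {μ}}) = 1 := by
  rw [← mem_ae_iff_prob_eq_one
    (.biUnion hP fun μ _ => measurableSet_limitSet_eq_singleton hT μ), ← eventually_mem_set]
  simp only [Set.mem_iUnion, Set.mem_ofPred_eq, exists_prop]

end LimitSet

section Observable

variable {X : Type*} [TopologicalSpace X] [MeasurableSpace X]

section OpensMeasurableSpace

variable [OpensMeasurableSpace X] {Leb : Measure X} {T : X → X} {μ : ProbabilityMeasure X}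

theorem isObservable_iff_frequently :
    IsObservable Leb T μ ↔
      ∀ U, IsOpen U → μ ∈ U → ∃ᵐ x ∂Leb, (limitSet T x ∩ U).Nonempty := by
  simp only [IsObservable, frequently_ae_iff, pos_iff_ne_zero]

theorem isPhysical_iff_frequently : IsPhysical Leb T μ ↔ ∃ᵐ x ∂Leb, limitSet T x = {μ} := by
  simp only [IsPhysical, frequently_ae_iff, pos_iff_ne_zero]

theorem IsPhysical.isObservable (h : IsPhysical Leb T μ) : IsObservable Leb T μ :=
  isObservable_iff_frequently.2 fun _ _ hμU =>
    (isPhysical_iff_frequently.1 h).mono fun _ hx => ⟨μ, hx ▸ Set.mem_singleton μ, hμU⟩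

theorem ae_isPhysical_of_limitSet_eq_singleton (Leb : Measure X) (T : X → X)
    (μ : ProbabilityMeasure X) : ∀ᵐ x ∂Leb, limitSet T x = {μ} → IsPhysical Leb T μ := by
  by_cases hμ : IsPhysical Leb T μ
  · exact .of_forall fun _ _ => hμ
  · exact (not_frequently.1 (isPhysical_iff_frequently.not.1 hμ)).mono fun _ hx h => absurd h hx

theorem IsObservable.mem_of_ae_limitSet_subset (hμ : IsObservable Leb T μ)
    {P : Set (ProbabilityMeasure X)} (hP : IsClosed P) (h : ∀ᵐ x ∂Leb, limitSet T x ⊆ P) :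
    μ ∈ P := by
  by_contra hμP
  obtain ⟨x, ⟨ν, hν, hνP⟩, hx⟩ :=
    ((isObservable_iff_frequently.1 hμ Pᶜ hP.isOpen_compl hμP).and_eventually h).exists
  exact hνP (hx hν)

theorem ae_limitSet_subset_setOfPred_isObservable
    [HereditarilyLindelofSpace (ProbabilityMeasure X)] (Leb : Measure X) (T : X → X) :
    ∀ᵐ x ∂Leb, limitSet T x ⊆ {μ | IsObservable Leb T μ} := by
  simpa only [isObservable_iff_frequently] using
    eventually_subset_setOfPred_frequently_inter_nonempty (ae Leb) (limitSet T)

end OpensMeasurableSpace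

variable [BorelSpace X] {Leb : Measure X} {T : X → X}

theorem setOfPred_isObservable_subset_of_ae_limitSet_eq_singleton [HasOuterApproxClosed X]
    {P : Set (ProbabilityMeasure X)} (hP : P.Finite)
    (hcover : ∀ᵐ x ∂Leb, ∃ μ ∈ P, limitSet T x = {μ}) :
    {μ | IsObservable Leb T μ} ⊆ P := fun _ hμ =>
  IsObservable.mem_of_ae_limitSet_subset hμ hP.isClosed <| hcover.mono fun _ ⟨_, hνP, hν⟩ =>
    hν ▸ Set.singleton_subset_iff.2 hνP

theorem ae_exists_isPhysical_limitSet_eq_singleton [CompactSpace X]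
    [TopologicalSpace.MetrizableSpace X] (hfin : {μ | IsObservable Leb T μ}.Finite) :
    ∀ᵐ x ∂Leb, ∃ μ, IsPhysical Leb T μ ∧ limitSet T x = {μ} := by
  have hphysical : ∀ᵐ x ∂Leb, ∀ μ ∈ {μ | IsObservable Leb T μ},
      limitSet T x = {μ} → IsPhysical Leb T μ :=
    (eventually_all_finite hfin).2 fun μ _ => ae_isPhysical_of_limitSet_eq_singleton Leb T μ
  filter_upwards [hphysical, ae_limitSet_subset_setOfPred_isObservable Leb T] with x hx hsub
  obtain ⟨μ, hμ⟩ := exists_limitSet_eq_singleton_of_finite (hfin.subset hsub)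
  exact ⟨μ, hx μ (hsub (hμ ▸ Set.mem_singleton μ)) hμ, hμ⟩

end Observable

theorem finitely_many_physical_iff_observable_finite_general
    {X : Type*} [TopologicalSpace X] [CompactSpace X] [TopologicalSpace.MetrizableSpace X]
    [MeasurableSpace X] [BorelSpace X] (T : X → X) (Leb : Measure X) :
    ((∃ P : Set (ProbabilityMeasure X), P.Finite ∧ (∀ μ ∈ P, IsPhysical Leb T μ) ∧
        ∀ᵐ x ∂Leb, ∃ μ ∈ P, limitSet T x = {μ}) ↔
      {μ : ProbabilityMeasure X | IsObservable Leb T μ}.Finite) ∧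
    ({μ : ProbabilityMeasure X | IsObservable Leb T μ}.Finite →
      {μ : ProbabilityMeasure X | IsObservable Leb T μ} =
        {μ : ProbabilityMeasure X | IsPhysical Leb T μ}) := by
  have hPhyO : {μ | IsPhysical Leb T μ} ⊆ {μ | IsObservable Leb T μ} :=
    fun _ hμ => IsPhysical.isObservable hμ
  refine ⟨⟨fun ⟨P, hP, _, hcover⟩ => ?_, fun hfin => ?_⟩, fun hfin => ?_⟩
  · exact hP.subset (setOfPred_isObservable_subset_of_ae_limitSet_eq_singleton hP hcover)
  · exact ⟨{μ | IsPhysical Leb T μ}, hfin.subset hPhyO, fun _ hμ => hμ,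
      ae_exists_isPhysical_limitSet_eq_singleton hfin⟩
  · exact (setOfPred_isObservable_subset_of_ae_limitSet_eq_singleton (hfin.subset hPhyO)
      (ae_exists_isPhysical_limitSet_eq_singleton hfin)).antisymm hPhyO

/-- **Theorem 2.3 ([CE11, Theorem 1.6]).** There are finitely many physical measures whose
basins of attraction cover `X` Lebesgue-almost everywhere if and only if the set `O` of
observable measures is finite; and in this case `O = Phy`. -/
theorem finitely_many_physical_iff_observable_finite
    {X : Type*} [MetricSpace X] [CompactSpace X] [MeasurableSpace X] [BorelSpace X]
    (T : X → X) (hT : IsHomeomorph T)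
    (Leb : MeasureTheory.Measure X) [IsProbabilityMeasure Leb] :
    ((∃ P : Set (ProbabilityMeasure X), P.Finite ∧ (∀ μ ∈ P, IsPhysical Leb T μ) ∧
        Leb (⋃ μ ∈ P, {x | limitSet T x = {μ}}) = 1) ↔
      {μ : ProbabilityMeasure X | IsObservable Leb T μ}.Finite) ∧
    ({μ : ProbabilityMeasure X | IsObservable Leb T μ}.Finite →
      {μ : ProbabilityMeasure X | IsObservable Leb T μ} =
        {μ : ProbabilityMeasure X | IsPhysical Leb T μ}) := by
  obtain ⟨hiff, heq⟩ := finitely_many_physical_iff_observable_finite_general T Leb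
  exact ⟨.trans (exists_congr fun _ => and_congr_right fun hP => and_congr_right fun _ =>
    (ae_exists_mem_limitSet_eq_singleton_iff hT.continuous hP.countable).symm) hiff, heq⟩
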